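/- Assume (p₀), (V_α), (G_β). Then there exist constants C < ∞ and c > 0 such that for all x ∈ G, R > 0 and positive integers n, P_x(T_{B(x,R)} ≤ n) ≤ C·exp(−(c·R^β/n)^{1/(β−1)}). -/

import Mathlib

open scoped ENNReal

open Classical in
noncomputable def nstep {V : Type*} (p : V → V → ℝ) : ℕ → V → V → ℝ
  | 0, x, y => if x = y then 1 else 0
  | n + 1, x, y => ∑' z, nstep p n x z * p z y

noncomputable def green {V : Type*} (p : V → V → ℝ) (lam : V → ℝ) (x y : V) : ℝ :=
  (1 / lam y) * ∑' n, nstep p n x y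

open Classical in
noncomputable def killedKernel {V : Type*} (p : V → V → ℝ) (U : Set V) (x y : V) : ℝ :=
  if x ∈ U ∧ y ∈ U then p x y else 0

noncomputable def killedGreen {V : Type*} (p : V → V → ℝ) (lam : V → ℝ) (U : Set V) (x y : V) : ℝ :=
  (1 / lam y) * ∑' n, nstep (killedKernel p U) n x y

open Classical in
noncomputable def hitProb {V : Type*} (p : V → V → ℝ) (A : Set V) (x : V) : ℝ :=
  ∑' n : ℕ, ∑' y : V, if y ∈ A then nstep (fun a b => if a ∈ A then 0 else p a b) n x y else 0

open Classical in
noncomputable def eqMeasure {V : Type*} (p : V → V → ℝ) (lam : V → ℝ) (A : Set V) (x : V) : ℝ :=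
  if x ∈ A then lam x * (1 - ∑' y, p x y * hitProb p A y) else 0

noncomputable def capaE {V : Type*} (p : V → V → ℝ) (lam : V → ℝ) (A : Set V) : ℝ≥0∞ :=
  ∑' x : V, Set.indicator A (fun v => ENNReal.ofReal (eqMeasure p lam A v)) x

/-!
Let `F` be the expected time spent in a ball `B` of radius `ρ` around `y₀`. It drops by at most `1`
per step, is of order `ρ ^ β` at `y₀` and everywhere at most of that order, and is at most half its
lower bound at `y₀` outside a fixed dilate `L • B`. So `1` minus a multiple of `F`, shifted to be at
least `1` outside `L • B`, is multiplied by at most `exp (M * ρ ^ (-β))` under the transition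
operator while it is at most `1 - ε` at `y₀`: the exit time `T` of `L • B` satisfies
`𝔼[exp (-M * ρ ^ (-β) * T)] ≤ 1 - ε`. The steps of the walk are bounded by some `D`, because
`g(x, y) ≥ c₀ * g(y, y)` for neighbours and `g` decays with the distance. Leaving `B(x, R)` thus
requires about `R / ρ` successive exits from balls of radius `L * ρ`, which gives the bound
`exp (ε + M * n * ρ ^ (-β) - e * R / ρ)` with `e = ε / (L + D)`. Balancing the last two terms fixes
`ρ`; the constraint `1 ≤ ρ` costs nothing because the walk cannot leave the ball when `n * D < R`.
-/

section TransitionOperator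

variable {V : Type*} {k : V → V → ℝ}

/-- A kernel has finite range if from every point it charges only finitely many points. -/
def HasFiniteRange (k : V → V → ℝ) : Prop :=
  ∀ x, (Function.support (k x)).Finite

lemma HasFiniteRange.summable_mul (hk : HasFiniteRange k) (f : V → ℝ) (x : V) :
    Summable fun y => k x y * f y :=
  summable_of_hasFiniteSupport ((hk x).subset (Function.support_mul_subset_left _ _))

/-- The operator `f ↦ (x ↦ ∑ y, k x y * f y)`. Finite range makes it linear on all functions,
bounded or not. -/
noncomputable def transitionOp (hk : HasFiniteRange k) : Module.End ℝ (V → ℝ) where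
  toFun f x := ∑' y, k x y * f y
  map_add' f g := by
    ext x
    simp only [Pi.add_apply, mul_add]
    exact (hk.summable_mul f x).tsum_add (hk.summable_mul g x)
  map_smul' c f := by
    ext x
    simp only [Pi.smul_apply, smul_eq_mul, RingHom.id_apply, ← tsum_mul_left]
    exact tsum_congr fun y => by ring

lemma transitionOp_apply (hk : HasFiniteRange k) (f : V → ℝ) (x : V) :
    transitionOp hk f x = ∑' y, k x y * f y :=
  rfl

lemma transitionOp_eq_sum (hk : HasFiniteRange k) (f : V → ℝ) (x : V) :
    transitionOp hk f x = ∑ y ∈ (hk x).toFinset, k x y * f y :=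
  tsum_eq_sum fun y hy => by simp_all

lemma transitionOp_le_transitionOp (hk : HasFiniteRange k) (hk₀ : ∀ x y, 0 ≤ k x y)
    {f g : V → ℝ} {x : V} (hfg : ∀ y, k x y ≠ 0 → f y ≤ g y) :
    transitionOp hk f x ≤ transitionOp hk g x := by
  refine (hk.summable_mul f x).tsum_le_tsum (fun y => ?_) (hk.summable_mul g x)
  by_cases hy : k x y = 0
  · simp [hy]
  · exact mul_le_mul_of_nonneg_left (hfg y hy) (hk₀ x y)

lemma mul_le_transitionOp (hk : HasFiniteRange k) (hk₀ : ∀ x y, 0 ≤ k x y) {f : V → ℝ}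
    (hf : ∀ y, 0 ≤ f y) (x y : V) : k x y * f y ≤ transitionOp hk f x :=
  (hk.summable_mul f x).le_tsum y fun z _ => mul_nonneg (hk₀ x z) (hf z)

lemma HasFiniteRange.nstep (hk : HasFiniteRange k) (n : ℕ) : HasFiniteRange (nstep k n) := by
  intro x
  induction n with
  | zero =>
    refine (Set.finite_singleton x).subset fun y hy => ?_
    by_contra hyx
    exact hy (if_neg (Ne.symm hyx))
  | succ n ih =>
    refine (ih.biUnion fun z _ => hk z).subset fun y hy => ?_
    obtain ⟨z, hz⟩ : ∃ z, _root_.nstep k n x z * k z y ≠ 0 := by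
      by_contra! h
      exact hy (by simp [_root_.nstep, h])
    exact Set.mem_biUnion (left_ne_zero_of_mul hz) (right_ne_zero_of_mul hz)

lemma nstep_nonneg (hk₀ : ∀ x y, 0 ≤ k x y) (n : ℕ) (x y : V) : 0 ≤ nstep k n x y := by
  induction n generalizing y with
  | zero => unfold nstep; split_ifs <;> norm_num
  | succ n ih => exact tsum_nonneg fun z => mul_nonneg (ih z) (hk₀ z y)

lemma transitionOp_nstep (hk : HasFiniteRange k) (n : ℕ) :
    transitionOp (hk.nstep n) = transitionOp hk ^ n := by
  induction n with
  | zero =>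
    ext f x
    rw [transitionOp_apply, tsum_eq_single x fun y hy => by simp [nstep, hy.symm]]
    simp [nstep]
  | succ n ih =>
    ext f x
    have hsum : Summable (Function.uncurry fun z y => nstep k n x z * k z y * f y) := by
      have hz := hk.nstep n x
      refine summable_of_hasFiniteSupport
        ((hz.prod (hz.biUnion fun z _ => hk z)).subset fun ⟨z, y⟩ hyz => ?_)
      have hzy := left_ne_zero_of_mul hyz
      exact ⟨left_ne_zero_of_mul hzy,
        Set.mem_biUnion (left_ne_zero_of_mul hzy) (right_ne_zero_of_mul hzy)⟩
    calc transitionOp (hk.nstep (n + 1)) f x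
        = ∑' y, ∑' z, nstep k n x z * k z y * f y := by
          simp only [transitionOp_apply, nstep, tsum_mul_right]
      _ = ∑' z, nstep k n x z * ∑' y, k z y * f y := by
          rw [hsum.tsum_comm]
          simp only [mul_assoc, tsum_mul_left]
      _ = (transitionOp hk ^ (n + 1)) f x := by
          rw [pow_succ, ← ih]
          rfl

lemma tsum_nstep (hk : HasFiniteRange k) (n : ℕ) (x : V) :
    ∑' y, nstep k n x y = (transitionOp hk ^ n) 1 x := by
  simp [← transitionOp_nstep, transitionOp_apply]

open Classical in
lemma nstep_eq_transitionOp_pow_single (hk : HasFiniteRange k) (n : ℕ) (x y : V) :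
    nstep k n x y = (transitionOp hk ^ n) (Pi.single y 1) x := by
  simp [← transitionOp_nstep, transitionOp_apply, Pi.single_apply]

lemma nstep_succ_eq_transitionOp (hk : HasFiniteRange k) (n : ℕ) (x y : V) :
    nstep k (n + 1) x y = transitionOp hk (fun z => nstep k n z y) x := by
  classical
  simp only [nstep_eq_transitionOp_pow_single hk]
  rw [pow_succ', Module.End.mul_apply]

/-- A kernel is stochastic if each of its rows is a probability vector. -/
structure IsStochastic (p : V → V → ℝ) : Prop where
  nonneg : ∀ x y, 0 ≤ p x y
  hasSum_one : ∀ x, HasSum (p x) 1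

lemma IsStochastic.hasFiniteRange {p : V → V → ℝ} (hp : IsStochastic p) {c₀ : ℝ} (hc₀ : 0 < c₀)
    (hp₀ : ∀ x y, p x y ≠ 0 → c₀ ≤ p x y) : HasFiniteRange p := fun x => by
  have hsmall := (hp.hasSum_one x).summable.tendsto_cofinite_zero.eventually_lt_const hc₀
  exact (Filter.eventually_cofinite.1 hsmall).subset fun y hy => not_lt.2 (hp₀ x y hy)

lemma IsStochastic.transitionOp_one {p : V → V → ℝ} (hp : IsStochastic p)
    (hfin : HasFiniteRange p) : transitionOp hfin 1 = 1 := by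
  ext x
  simp [transitionOp_apply, (hp.hasSum_one x).tsum_eq]

end TransitionOperator

section MaximumPrinciple

variable {V : Type*} {p : V → V → ℝ}

/-- A kernel is irreducible if every point can be reached from every other one along positive
transition probabilities. -/
def IsIrreducibleKernel (p : V → V → ℝ) : Prop :=
  ∀ x y, Relation.ReflTransGen (fun a b => p a b ≠ 0) x y

lemma eq_of_isMaxOn_of_le_transitionOp (hp : IsStochastic p) (hfin : HasFiniteRange p)
    {a : V → ℝ} {x y : V} (hmax : ∀ u, a u ≤ a x) (hsub : a x ≤ transitionOp hfin a x)
    (hxy : p x y ≠ 0) : a y = a x := by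
  have hdefect : p x y * (a x - a y) ≤ a x - transitionOp hfin a x := by
    have := mul_le_transitionOp hfin hp.nonneg (f := a x • 1 - a)
      (fun u => by simpa using hmax u) x y
    simpa [hp.transitionOp_one hfin] using this
  have hpos : 0 < p x y := (hp.nonneg x y).lt_of_ne' hxy
  nlinarith [hmax y]

theorem le_of_le_transitionOp_of_ne (hp : IsStochastic p) (hfin : HasFiniteRange p)
    (hirr : IsIrreducibleKernel p) {a : V → ℝ} {C : ℝ} {z : V} (hC : {u | C < a u}.Finite)
    (hz : a z ≤ C) (hsub : ∀ y, y ≠ z → a y ≤ transitionOp hfin a y) (y : V) : a y ≤ C := by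
  by_contra! hy
  obtain ⟨m, hm, hmax⟩ := Set.exists_max_image _ a hC ⟨y, hy⟩
  have hm : C < a m := hm
  have hmax : ∀ u, a u ≤ a m := fun u =>
    (le_or_gt (a u) C).elim (fun hu => hu.trans hm.le) (hmax u)
  have hreach : ∀ u, Relation.ReflTransGen (fun a b => p a b ≠ 0) m u → a u = a m := by
    intro u hu
    induction hu with
    | refl => rfl
    | @tail v w _ hvw hv =>
      have hvz : v ≠ z := by rintro rfl; linarith
      rw [← hv]
      exact eq_of_isMaxOn_of_le_transitionOp hp hfin (by simpa [hv] using hmax) (hsub v hvz) hvw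
  linarith [hreach z (hirr m z)]

end MaximumPrinciple

section ExitProbability

variable {V : Type*} {p : V → V → ℝ} {U : Set V}

lemma killedKernel_nonneg (hp : ∀ x y, 0 ≤ p x y) (U : Set V) (x y : V) :
    0 ≤ killedKernel p U x y := by
  unfold killedKernel
  split_ifs
  exacts [hp x y, le_rfl]

lemma HasFiniteRange.killedKernel (hfin : HasFiniteRange p) (U : Set V) :
    HasFiniteRange (killedKernel p U) := fun x =>
  (hfin x).subset fun y hy hxy => hy (by simp [_root_.killedKernel, hxy])

open Classical in
/-- The probability that the walk started at `y` leaves `U` by time `n`. A walk that starts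
outside `U` is treated separately because `nstep (killedKernel p U) 0` still gives it mass `1`. -/
noncomputable def exitProb (p : V → V → ℝ) (U : Set V) (n : ℕ) (y : V) : ℝ :=
  if y ∈ U then 1 - ∑' z, nstep (killedKernel p U) n y z else 1

lemma exitProb_zero {y : V} (hy : y ∈ U) : exitProb p U 0 y = 0 := by
  simp [exitProb, hy, nstep]

lemma exitProb_succ (hp : IsStochastic p) (hfin : HasFiniteRange p) (n : ℕ) {y : V} (hy : y ∈ U) :
    exitProb p U (n + 1) y = transitionOp hfin (exitProb p U n) y := by
  have hkilled := hfin.killedKernel U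
  rw [exitProb, if_pos hy, tsum_nstep hkilled, pow_succ', Module.End.mul_apply,
    transitionOp_apply hkilled, transitionOp_apply, ← (hp.hasSum_one y).tsum_eq,
    ← (hp.hasSum_one y).summable.tsum_sub (hkilled.summable_mul _ y)]
  refine tsum_congr fun u => ?_
  rw [← tsum_nstep hkilled]
  by_cases hu : u ∈ U
  · simp [exitProb, killedKernel, hy, hu, mul_sub]
  · simp [exitProb, killedKernel, hu]

lemma exitProb_le_one (hp : ∀ x y, 0 ≤ p x y) (n : ℕ) (y : V) : exitProb p U n y ≤ 1 := by
  unfold exitProb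
  split_ifs
  · exact sub_le_self _ (tsum_nonneg (nstep_nonneg (killedKernel_nonneg hp U) n y))
  · exact le_rfl

theorem exitProb_le_pow_mul (hp : IsStochastic p) (hfin : HasFiniteRange p) {B : Set V}
    (hBU : B ⊆ U) {θ : ℝ} (hθ : 0 ≤ θ) {ψ : V → ℝ} (hψ₀ : ∀ z ∈ B, 0 ≤ ψ z)
    (hψ : ∀ z ∈ B, transitionOp hfin ψ z ≤ θ * ψ z)
    (hout : ∀ z ∈ B, ∀ u ∉ B, p z u ≠ 0 → ∀ n, exitProb p U n u ≤ θ ^ n * ψ u) (n : ℕ) {z : V}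
    (hz : z ∈ B) : exitProb p U n z ≤ θ ^ n * ψ z := by
  induction n generalizing z with
  | zero => simpa [exitProb_zero (hBU hz)] using hψ₀ z hz
  | succ n ih =>
    calc exitProb p U (n + 1) z
        = transitionOp hfin (exitProb p U n) z := exitProb_succ hp hfin n (hBU hz)
      _ ≤ transitionOp hfin (θ ^ n • ψ) z := by
          refine transitionOp_le_transitionOp hfin hp.nonneg fun u hu => ?_
          by_cases huB : u ∈ B
          · exact ih huB
          · exact hout z hz u huB hu n
      _ = θ ^ n * transitionOp hfin ψ z := by rw [map_smul, Pi.smul_apply, smul_eq_mul]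
      _ ≤ θ ^ n * (θ * ψ z) := by gcongr; exact hψ z hz
      _ = θ ^ (n + 1) * ψ z := by ring

end ExitProbability

section ExitFromBalls

variable {V : Type*} [PseudoMetricSpace V] {p : V → V → ℝ}

/-- `ψ` witnesses that the exit time `T` of the ball `B(y₀, r)` satisfies `𝔼[θ ^ (-T)] ≤ q` for
the walk started at `y₀`, because `θ ^ (-n) * ψ (Zₙ)` is a nonnegative supermartingale which is at
least `θ ^ (-T)` at time `T`. -/
structure IsExitBarrier (hfin : HasFiniteRange p) (θ r q : ℝ) (y₀ : V) (ψ : V → ℝ) : Prop where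
  nonneg : ∀ y, 0 ≤ ψ y
  one_le : ∀ y, r < dist y₀ y → 1 ≤ ψ y
  center_le : ψ y₀ ≤ q
  transitionOp_le : ∀ y, transitionOp hfin ψ y ≤ θ * ψ y

lemma IsExitBarrier.exitProb_le_pow_mul_mul (hp : IsStochastic p) {hfin : HasFiniteRange p}
    {U : Set V} {θ r q b : ℝ} {y : V} {ψ : V → ℝ} (hψ : IsExitBarrier hfin θ r q y ψ)
    (hr : 0 ≤ r) (hθ : 0 ≤ θ) (hb : 0 ≤ b) (hU : {v | dist y v ≤ r} ⊆ U)
    (hout : ∀ z u, dist y z ≤ r → r < dist y u → p z u ≠ 0 →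
      ∀ m, exitProb p U m u ≤ θ ^ m * b) (n : ℕ) :
    exitProb p U n y ≤ θ ^ n * (b * q) := by
  have hsuper (z : V) : transitionOp hfin (b • ψ) z ≤ θ * (b • ψ) z := by
    rw [map_smul, Pi.smul_apply, Pi.smul_apply, smul_eq_mul, smul_eq_mul, mul_left_comm]
    exact mul_le_mul_of_nonneg_left (hψ.transitionOp_le z) hb
  calc exitProb p U n y
      ≤ θ ^ n * (b • ψ) y := by
        refine exitProb_le_pow_mul hp hfin hU hθ (fun z _ => mul_nonneg hb (hψ.nonneg z))
          (fun z _ => hsuper z) (fun z hz u hu hzu m => ?_) n (by simpa using hr)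
        have hu : r < dist y u := not_le.1 hu
        refine (hout z u hz hu hzu m).trans ?_
        gcongr
        exact le_mul_of_one_le_right hb (hψ.one_le u hu)
    _ ≤ θ ^ n * (b * q) := by
        gcongr
        exact mul_le_mul_of_nonneg_left hψ.center_le hb

theorem exitProb_ball_le_pow_mul_pow (hp : IsStochastic p) (hfin : HasFiniteRange p) {D r θ q : ℝ}
    (hD : ∀ x y, p x y ≠ 0 → dist x y ≤ D) (hD₀ : 0 ≤ D) (hr : 0 ≤ r) (hθ : 1 ≤ θ)
    (hbar : ∀ y, ∃ ψ, IsExitBarrier hfin θ r q y ψ) (x : V) (R : ℝ) (j n : ℕ) (y : V)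
    (hy : dist x y + j * (r + D) ≤ R) :
    exitProb p {v | dist x v ≤ R} n y ≤ θ ^ n * q ^ j := by
  induction j generalizing n y with
  | zero => simpa using (exitProb_le_one hp.nonneg n y).trans (one_le_pow₀ hθ)
  | succ j ih =>
    obtain ⟨ψ, hψ⟩ := hbar y
    have hq : 0 ≤ q := (hψ.nonneg y).trans hψ.center_le
    have hjr : 0 ≤ j * (r + D) := by positivity
    push_cast at hy
    rw [pow_succ]
    refine hψ.exitProb_le_pow_mul_mul hp hr (by positivity) (by positivity) (fun v hv => ?_)
      (fun z u hz _ hzu m => ih m u ?_) n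
    · have hv : dist y v ≤ r := hv
      exact (dist_triangle x y v).trans (by linarith)
    · linarith [dist_triangle x y u, dist_triangle y z u, hD z u hzu]

lemma exitProb_ball_eq_zero (hp : IsStochastic p) (hfin : HasFiniteRange p) {D : ℝ}
    (hD : ∀ x y, p x y ≠ 0 → dist x y ≤ D) (hD₀ : 0 ≤ D) (x : V) (R : ℝ) (n : ℕ) (y : V)
    (hy : dist x y + n * D ≤ R) : exitProb p {v | dist x v ≤ R} n y = 0 := by
  have hyR : dist x y ≤ R := le_of_add_le_of_nonneg_left hy (by positivity)
  induction n generalizing y with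
  | zero => exact exitProb_zero hyR
  | succ n ih =>
    rw [exitProb_succ hp hfin n hyR]
    refine (tsum_congr fun u => ?_).trans tsum_zero
    by_cases hu : p y u = 0
    · rw [hu, zero_mul]
    · have hclose : dist x u + n * D ≤ R := by
        push_cast at hy
        linarith [dist_triangle x y u, hD y u hu]
      rw [ih u hclose (le_of_add_le_of_nonneg_left hclose (by positivity)), mul_zero]

end ExitFromBalls

section Optimization

-- At this `ρ` the time cost `b * ρ ^ (-β)` and the distance gain `a / ρ` are equal.
lemma rpow_balance {a b β : ℝ} (ha : 0 < a) (hb : 0 < b) (hβ : 1 < β) :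
    b * ((b / a) ^ (1 / (β - 1))) ^ (-β) = a / (b / a) ^ (1 / (β - 1)) ∧
      a / (b / a) ^ (1 / (β - 1)) = (a ^ β / b) ^ (1 / (β - 1)) := by
  have hβ' : 0 < β - 1 := sub_pos.2 hβ
  set ρ := (b / a) ^ (1 / (β - 1)) with hρ
  have hρ₀ : 0 < ρ := by positivity
  have hρβ : ρ ^ (β - 1) = b / a := by
    rw [hρ, ← Real.rpow_mul (by positivity), one_div_mul_cancel hβ'.ne', Real.rpow_one]
  constructor
  · rw [show -β = -(β - 1) - 1 by ring, Real.rpow_sub_one hρ₀.ne', Real.rpow_neg hρ₀.le, hρβ]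
    field_simp
  · have hbase : a ^ β / b = (a / ρ) ^ (β - 1) := by
      rw [Real.div_rpow ha.le hρ₀.le, hρβ, Real.rpow_sub_one ha.ne']
      field_simp
    rw [hbase, ← Real.rpow_mul (by positivity), mul_one_div_cancel hβ'.ne', Real.rpow_one]

lemma exists_scale_le_neg_rpow {β M e D : ℝ} (hβ : 1 < β) (he : 0 < e) (hD : 0 < D) :
    ∃ c : ℝ, 0 < c ∧ ∀ R t : ℝ, 0 < R → 0 < t → R ≤ t * D →
      ∃ ρ : ℝ, 1 ≤ ρ ∧ M * ρ ^ (-β) * t - e * R / ρ ≤ -(c * R ^ β / t) ^ (1 / (β - 1)) := by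
  -- Enlarging `M` to `K` makes the balancing scale at least `1` whenever `R ≤ t * D`.
  set K := max M (e / 2 * D)
  have hK : 0 < K := lt_max_of_lt_right (by positivity)
  refine ⟨(e / 2) ^ β / K, by positivity, fun R t hR ht hRt => ?_⟩
  have ha : 0 < e / 2 * R := by positivity
  have hb : 0 < K * t := by positivity
  obtain ⟨hcost, hgain⟩ := rpow_balance ha hb hβ
  set ρ := (K * t / (e / 2 * R)) ^ (1 / (β - 1))
  have hρ : 1 ≤ ρ := by
    refine Real.one_le_rpow ?_ (one_div_nonneg.2 (sub_pos.2 hβ).le)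
    rw [one_le_div ha]
    calc e / 2 * R ≤ e / 2 * (t * D) := by gcongr
      _ = e / 2 * D * t := by ring
      _ ≤ K * t := by gcongr; exact le_max_right _ _
  refine ⟨ρ, hρ, ?_⟩
  calc M * ρ ^ (-β) * t - e * R / ρ
      ≤ K * t * ρ ^ (-β) - e * R / ρ := by
        rw [mul_right_comm]; gcongr; exact le_max_left _ _
    _ = -(e / 2 * R / ρ) := by rw [hcost]; ring
    _ = -((e / 2) ^ β / K * R ^ β / t) ^ (1 / (β - 1)) := by
        rw [hgain, Real.mul_rpow (by positivity) hR.le]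
        congr 2
        field_simp

lemma one_sub_pow_floor_le_exp {ε : ℝ} (hε₀ : 0 ≤ ε) (hε₁ : ε ≤ 1) (t : ℝ) :
    (1 - ε) ^ ⌊t⌋₊ ≤ Real.exp (ε - ε * t) :=
  calc (1 - ε) ^ ⌊t⌋₊ ≤ Real.exp (-ε) ^ ⌊t⌋₊ :=
        pow_le_pow_left₀ (sub_nonneg.2 hε₁) (Real.one_sub_le_exp_neg ε) _
    _ = Real.exp (-(ε * ⌊t⌋₊)) := by rw [← Real.exp_nat_mul]; ring_nf
    _ ≤ Real.exp (ε - ε * t) := by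
        gcongr
        nlinarith [Nat.lt_floor_add_one t]

end Optimization

section MultiscaleExit

variable {V : Type*} [PseudoMetricSpace V] {p : V → V → ℝ}

lemma exitProb_ball_le_exp (hp : IsStochastic p) (hfin : HasFiniteRange p) {D L M ε β ρ : ℝ}
    (hD : ∀ x y, p x y ≠ 0 → dist x y ≤ D) (hD₀ : 0 ≤ D) (hL : 0 < L) (hM : 0 ≤ M) (hε : 0 ≤ ε)
    (hρ : 1 ≤ ρ)
    (hbar : ∀ y, ∃ ψ, IsExitBarrier hfin (Real.exp (M * ρ ^ (-β))) (L * ρ) (1 - ε) y ψ)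
    (x : V) {R : ℝ} (hR : 0 ≤ R) (n : ℕ) :
    exitProb p {v | dist x v ≤ R} n x ≤
      Real.exp (ε + (M * ρ ^ (-β) * n - ε / (L + D) * R / ρ)) := by
  have hε₁ : ε ≤ 1 := by
    obtain ⟨ψ, hψ⟩ := hbar x
    linarith [hψ.nonneg x, hψ.center_le]
  have hr : L * ρ + D ≤ (L + D) * ρ := by
    rw [add_mul]; gcongr; exact le_mul_of_one_le_right hD₀ hρ
  set j := ⌊R / ((L + D) * ρ)⌋₊
  have hjR : dist x x + j * (L * ρ + D) ≤ R := by
    have hfloor := Nat.floor_le (show 0 ≤ R / ((L + D) * ρ) by positivity)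
    rw [le_div_iff₀ (by positivity)] at hfloor
    rw [dist_self, zero_add]
    exact (mul_le_mul_of_nonneg_left hr j.cast_nonneg).trans hfloor
  calc exitProb p {v | dist x v ≤ R} n x
      ≤ Real.exp (M * ρ ^ (-β)) ^ n * (1 - ε) ^ j :=
        exitProb_ball_le_pow_mul_pow hp hfin hD hD₀ (by positivity)
          (Real.one_le_exp (by positivity)) hbar x R j n x hjR
    _ ≤ Real.exp (M * ρ ^ (-β)) ^ n * Real.exp (ε - ε * (R / ((L + D) * ρ))) := by
        gcongr
        exact one_sub_pow_floor_le_exp hε hε₁ _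
    _ = Real.exp (ε + (M * ρ ^ (-β) * n - ε / (L + D) * R / ρ)) := by
        rw [← Real.exp_nat_mul, ← Real.exp_add]
        congr 1
        field_simp
        ring

theorem exists_exitProb_ball_le (hp : IsStochastic p) (hfin : HasFiniteRange p) {D L M ε β : ℝ}
    (hD : ∀ x y, p x y ≠ 0 → dist x y ≤ D) (hD₀ : 0 < D) (hL : 0 < L) (hM : 0 ≤ M) (hε : 0 < ε)
    (hβ : 1 < β)
    (hbar : ∀ ρ : ℝ, 1 ≤ ρ → ∀ y, ∃ ψ,
      IsExitBarrier hfin (Real.exp (M * ρ ^ (-β))) (L * ρ) (1 - ε) y ψ) :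
    ∃ C c : ℝ, 0 < C ∧ 0 < c ∧ ∀ (x : V) (R : ℝ) (n : ℕ), 0 < R → 0 < n →
      exitProb p {v | dist x v ≤ R} n x ≤
        C * Real.exp (-(c * R ^ β / n) ^ (1 / (β - 1))) := by
  obtain ⟨c, hc, hscale⟩ :=
    exists_scale_le_neg_rpow (M := M) (e := ε / (L + D)) hβ (by positivity) hD₀
  refine ⟨Real.exp ε, c, Real.exp_pos ε, hc, fun x R n hR hn => ?_⟩
  rcases le_or_gt R (n * D) with hnear | hfar
  · obtain ⟨ρ, hρ, hexp⟩ := hscale R n hR (by positivity) hnear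
    rw [← Real.exp_add]
    refine (exitProb_ball_le_exp hp hfin hD hD₀.le hL hM hε.le hρ (hbar ρ hρ) x hR.le n).trans ?_
    gcongr
  · rw [exitProb_ball_eq_zero hp hfin hD hD₀.le x R n x (by rw [dist_self]; linarith)]
    positivity

end MultiscaleExit

section GreenFunction

variable {V : Type*} {p : V → V → ℝ} {lam : V → ℝ}

open Classical in
lemma green_eq_single_add_transitionOp (hfin : HasFiniteRange p)
    (htrans : ∀ x y, Summable fun n => nstep p n x y) (y : V) :
    (green p lam · y) = Pi.single y (1 / lam y) + transitionOp hfin (green p lam · y) := by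
  ext x
  have hshift : ∑' n, nstep p (n + 1) x y = transitionOp hfin (fun z => ∑' n, nstep p n z y) x := by
    simp only [nstep_succ_eq_transitionOp hfin, transitionOp_eq_sum]
    rw [Summable.tsum_finsetSum fun z _ => (htrans z y).mul_left _]
    simp only [tsum_mul_left]
  have hgreen : (green p lam · y) = (1 / lam y) • fun z => ∑' n, nstep p n z y := rfl
  rw [hgreen, map_smul, Pi.add_apply, Pi.smul_apply, ← hshift, green,
    (htrans x y).tsum_eq_zero_add, mul_add]
  simp [nstep, Pi.single_apply]

lemma green_eq_transitionOp_of_ne (hfin : HasFiniteRange p)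
    (htrans : ∀ x y, Summable fun n => nstep p n x y) {x y : V} (hxy : x ≠ y) :
    green p lam x y = transitionOp hfin (green p lam · y) x := by
  classical
  simpa [hxy] using congrFun (green_eq_single_add_transitionOp (lam := lam) hfin htrans y) x

lemma green_nonneg (hp : ∀ x y, 0 ≤ p x y) (hlam : ∀ x, 0 ≤ lam x) (x y : V) :
    0 ≤ green p lam x y :=
  mul_nonneg (one_div_nonneg.2 (hlam y)) (tsum_nonneg fun n => nstep_nonneg hp n x y)

lemma one_div_le_green_self (hp : ∀ x y, 0 ≤ p x y)
    (htrans : ∀ x y, Summable fun n => nstep p n x y) (hlam : ∀ x, 0 ≤ lam x) (y : V) :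
    1 / lam y ≤ green p lam y y := by
  refine le_mul_of_one_le_right (one_div_nonneg.2 (hlam y)) ?_
  simpa [nstep] using (htrans y y).le_tsum 0 fun n _ => nstep_nonneg hp n y y

lemma mul_green_le_green (hp : ∀ x y, 0 ≤ p x y) (hfin : HasFiniteRange p)
    (htrans : ∀ x y, Summable fun n => nstep p n x y) (hlam : ∀ x, 0 ≤ lam x) (x z y : V) :
    p x z * green p lam z y ≤ green p lam x y := by
  classical
  calc p x z * green p lam z y
      ≤ transitionOp hfin (green p lam · y) x :=
        mul_le_transitionOp hfin hp (fun u => green_nonneg hp hlam u y) x z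
    _ ≤ Pi.single (M := fun _ => ℝ) y (1 / lam y) x + transitionOp hfin (green p lam · y) x :=
        le_add_of_nonneg_left (by
          rw [Pi.single_apply]
          split_ifs
          exacts [one_div_nonneg.2 (hlam y), le_rfl])
    _ = green p lam x y := (congrFun (green_eq_single_add_transitionOp hfin htrans y) x).symm

lemma green_pos (hp : ∀ x y, 0 ≤ p x y) (hfin : HasFiniteRange p) (hirr : IsIrreducibleKernel p)
    (htrans : ∀ x y, Summable fun n => nstep p n x y) (hlam : ∀ x, 0 < lam x) (x y : V) :
    0 < green p lam x y := by
  have hlam₀ := fun z => (hlam z).le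
  induction hirr x y using Relation.ReflTransGen.head_induction_on with
  | refl => exact (one_div_pos.2 (hlam y)).trans_le (one_div_le_green_self hp htrans hlam₀ y)
  | @head a b hab _ hb =>
    exact (mul_pos ((hp a b).lt_of_ne' hab) hb).trans_le
      (mul_green_le_green hp hfin htrans hlam₀ a b y)

end GreenFunction

section GreenBounds

variable {V : Type*} [PseudoMetricSpace V] {p : V → V → ℝ} {lam : V → ℝ}

/-- Two-sided Green function bounds: `(G_β)` is the case `γ = α - β`. -/
structure HasGreenDecay (g : V → V → ℝ) (γ c C : ℝ) : Prop where
  diag : ∀ x, c ≤ g x x ∧ g x x ≤ C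
  off_diag : ∀ x y, x ≠ y → c * dist x y ^ (-γ) ≤ g x y ∧ g x y ≤ C * dist x y ^ (-γ)

variable {g : V → V → ℝ} {γ c C : ℝ}

lemma HasGreenDecay.le_of_dist_pos (hg : HasGreenDecay g γ c C) {x y : V} (hxy : 0 < dist x y) :
    g x y ≤ C * dist x y ^ (-γ) :=
  (hg.off_diag x y (by rintro rfl; simp at hxy)).2

lemma HasGreenDecay.le_of_le_dist (hg : HasGreenDecay g γ c C) (hγ : 0 ≤ γ) (hC : 0 ≤ C)
    {x y : V} {ρ : ℝ} (hρ : 0 < ρ) (hxy : ρ ≤ dist x y) : g x y ≤ C * ρ ^ (-γ) :=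
  (hg.le_of_dist_pos (hρ.trans_le hxy)).trans
    (mul_le_mul_of_nonneg_left (Real.rpow_le_rpow_of_nonpos hρ hxy (neg_nonpos.2 hγ)) hC)

-- At distance zero the upper bound reads `g x y ≤ C * 0 ^ (-γ) = 0`.
lemma HasGreenDecay.dist_pos (hg : HasGreenDecay g γ c C) (hγ : γ ≠ 0) {x y : V} (hxy : x ≠ y)
    (hpos : 0 < g x y) : 0 < dist x y := by
  refine dist_nonneg.lt_of_ne fun hdist => ?_
  have hupper := (hg.off_diag x y hxy).2
  rw [← hdist, Real.zero_rpow (neg_ne_zero.2 hγ), mul_zero] at hupper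
  exact hpos.not_ge hupper

lemma HasGreenDecay.le_of_dist_le (hg : HasGreenDecay g γ c C) (hγ : 0 < γ) (hc : 0 ≤ c)
    (hpos : ∀ x y, 0 < g x y) {x y : V} {ρ : ℝ} (hρ : 1 ≤ ρ) (hxy : dist x y ≤ ρ) :
    c * ρ ^ (-γ) ≤ g x y := by
  rcases eq_or_ne x y with rfl | hne
  · exact (mul_le_of_le_one_right hc
      (Real.rpow_le_one_of_one_le_of_nonpos hρ (neg_nonpos.2 hγ.le))).trans (hg.diag x).1
  · refine le_trans ?_ (hg.off_diag x y hne).1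
    gcongr ?_ * ?_
    exact Real.rpow_le_rpow_of_nonpos (hg.dist_pos hγ.ne' hne (hpos x y)) hxy (neg_nonpos.2 hγ.le)

lemma HasGreenDecay.dist_le (hg : HasGreenDecay g γ c C) (hγ : 0 < γ) (hC : 0 < C) {a : ℝ}
    (ha : 0 < a) {x y : V} (hxy : x ≠ y) (hag : a ≤ g x y) : dist x y ≤ (a / C) ^ (-γ)⁻¹ := by
  rw [Real.le_rpow_inv_iff_of_neg (hg.dist_pos hγ.ne' hxy (ha.trans_le hag)) (by positivity)
    (neg_neg_of_pos hγ), div_le_iff₀' hC]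
  exact hag.trans (hg.off_diag x y hxy).2

lemma dist_le_of_hasGreenDecay_green (hp : ∀ x y, 0 ≤ p x y) (hfin : HasFiniteRange p)
    (htrans : ∀ x y, Summable fun n => nstep p n x y) (hlam : ∀ x, 0 ≤ lam x) {c₀ : ℝ}
    (hc₀ : 0 < c₀) (hp₀ : ∀ x y, p x y ≠ 0 → c₀ ≤ p x y)
    (hg : HasGreenDecay (green p lam) γ c C) (hγ : 0 < γ) (hc : 0 < c) (hC : 0 < C) {x y : V}
    (hxy : p x y ≠ 0) : dist x y ≤ (c₀ * c / C) ^ (-γ)⁻¹ := by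
  rcases eq_or_ne x y with rfl | hne
  · rw [dist_self]; positivity
  · refine hg.dist_le hγ hC (mul_pos hc₀ hc) hne ?_
    calc c₀ * c ≤ p x y * green p lam y y :=
          mul_le_mul (hp₀ x y hxy) (hg.diag y).1 hc.le (hp x y)
      _ ≤ green p lam x y := mul_green_le_green hp hfin htrans hlam x y y

lemma green_le_of_hasGreenDecay (hp : IsStochastic p) (hfin : HasFiniteRange p)
    (hirr : IsIrreducibleKernel p) (htrans : ∀ x y, Summable fun n => nstep p n x y)
    (hball : ∀ (x : V) (r : ℝ), {y | dist x y ≤ r}.Finite)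
    (hg : HasGreenDecay (green p lam) γ c C) (hγ : 0 ≤ γ) (hC : 0 ≤ C) (x y : V) :
    green p lam x y ≤ C := by
  refine le_of_le_transitionOp_of_ne (a := (green p lam · y)) hp hfin hirr
    ((hball y 1).subset fun u hu => ?_)
    (hg.diag y).2 (fun z hz => (green_eq_transitionOp_of_ne hfin htrans hz).le) x
  by_contra hdist
  have hdist : 1 ≤ dist u y := by rw [dist_comm]; exact (not_le.1 hdist).le
  have hle := hg.le_of_le_dist hγ hC one_pos hdist
  rw [Real.one_rpow, mul_one] at hle
  exact hle.not_gt hu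

end GreenBounds

section VolumeGrowth

variable {V : Type*} [PseudoMetricSpace V] {lam : V → ℝ} {α γ cV CV C : ℝ}

/-- The volume growth condition `(V_α)` for the measure with point masses `lam`. -/
def HasVolumeGrowth (hball : ∀ (x : V) (r : ℝ), {y | dist x y ≤ r}.Finite) (lam : V → ℝ)
    (α cV CV : ℝ) : Prop :=
  ∀ x r, 1 ≤ r → cV * r ^ α ≤ ∑ y ∈ (hball x r).toFinset, lam y ∧
    ∑ y ∈ (hball x r).toFinset, lam y ≤ CV * r ^ α

variable {hball : ∀ (x : V) (r : ℝ), {y | dist x y ≤ r}.Finite}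

lemma HasVolumeGrowth.pos [Nonempty V] (hV : HasVolumeGrowth hball lam α cV CV) (hcV : 0 < cV) :
    0 < CV := by
  obtain ⟨x⟩ := ‹Nonempty V›
  have hone := hV x 1 le_rfl
  simp only [Real.one_rpow, mul_one] at hone
  exact hcV.trans_le (hone.1.trans hone.2)

lemma ball_toFinset_subset (hball : ∀ (x : V) (r : ℝ), {y | dist x y ≤ r}.Finite) {x y : V}
    {r s : ℝ} (h : dist y x + r ≤ s) : (hball x r).toFinset ⊆ (hball y s).toFinset := by
  intro z hz
  simp only [Set.Finite.mem_toFinset, Set.mem_ofPred_eq] at hz ⊢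
  linarith [dist_triangle y x z]

lemma sum_ball_mul_le (hV : HasVolumeGrowth hball lam α cV CV) (hlam : ∀ x, 0 ≤ lam x)
    {f : V → ℝ} {x : V} {r B : ℝ} (hr : 1 ≤ r) (hB : 0 ≤ B) {s : Finset V}
    (hs : s ⊆ (hball x r).toFinset) (hf : ∀ z ∈ s, f z ≤ B) :
    ∑ z ∈ s, f z * lam z ≤ B * (CV * r ^ α) :=
  calc ∑ z ∈ s, f z * lam z ≤ ∑ z ∈ s, B * lam z :=
        Finset.sum_le_sum fun z hz => mul_le_mul_of_nonneg_right (hf z hz) (hlam z)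
    _ ≤ ∑ z ∈ (hball x r).toFinset, B * lam z :=
        Finset.sum_le_sum_of_subset_of_nonneg hs fun z _ _ => mul_nonneg hB (hlam z)
    _ = B * ∑ z ∈ (hball x r).toFinset, lam z := by rw [Finset.mul_sum]
    _ ≤ B * (CV * r ^ α) := mul_le_mul_of_nonneg_left (hV x r hr).2 hB

lemma sum_dyadic_ball_mul_le (hV : HasVolumeGrowth hball lam α cV CV) (hlam : ∀ x, 0 ≤ lam x)
    (hα : 0 ≤ α) (hγ : 0 ≤ γ) (hγα : 1 ≤ α - γ) (hCV : 0 ≤ CV) (hC : 0 ≤ C) {f : V → ℝ} {x : V}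
    (hf : ∀ z, f z ≤ C) (hdecay : ∀ z, 0 < dist x z → f z ≤ C * dist x z ^ (-γ)) (k : ℕ) :
    ∑ z ∈ (hball x (2 ^ k)).toFinset, f z * lam z ≤ C * CV * 2 ^ α * (2 ^ k) ^ (α - γ) := by
  classical
  induction k with
  | zero =>
    refine (sum_ball_mul_le hV hlam (by simp) hC subset_rfl fun z _ => hf z).trans ?_
    simp only [pow_zero, Real.one_rpow, mul_one]
    exact le_mul_of_one_le_right (by positivity) (Real.one_le_rpow one_le_two hα)
  | succ k ih =>
    set T : ℝ := 2 ^ k with hT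
    have hT₁ : 1 ≤ T := one_le_pow₀ one_le_two
    have hT₀ : 0 < T := one_pos.trans_le hT₁
    have hsub : (hball x T).toFinset ⊆ (hball x (T * 2)).toFinset :=
      ball_toFinset_subset hball (by rw [dist_self]; linarith)
    have hshell : ∑ z ∈ (hball x (T * 2)).toFinset \ (hball x T).toFinset, f z * lam z ≤
        C * CV * 2 ^ α * T ^ (α - γ) := by
      refine (sum_ball_mul_le (B := C * T ^ (-γ)) hV hlam (by linarith) (by positivity)
        Finset.sdiff_subset fun z hz => ?_).trans_eq ?_
      · simp only [Finset.mem_sdiff, Set.Finite.mem_toFinset, Set.mem_ofPred_eq, not_le] at hz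
        refine (hdecay z (hT₀.trans hz.2)).trans (mul_le_mul_of_nonneg_left ?_ hC)
        exact Real.rpow_le_rpow_of_nonpos hT₀ hz.2.le (neg_nonpos.2 hγ)
      · rw [Real.mul_rpow hT₀.le zero_le_two, sub_eq_add_neg, Real.rpow_add hT₀]
        ring
    have htwo : (2 : ℝ) ≤ 2 ^ (α - γ) := by
      simpa using Real.rpow_le_rpow_of_exponent_le one_le_two hγα
    rw [pow_succ, ← hT, ← Finset.sum_sdiff hsub, Real.mul_rpow hT₀.le zero_le_two]
    have : 0 ≤ C * CV * 2 ^ α * T ^ (α - γ) := by positivity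
    nlinarith

theorem sum_ball_mul_le_rpow (hV : HasVolumeGrowth hball lam α cV CV) (hlam : ∀ x, 0 ≤ lam x)
    (hα : 0 ≤ α) (hγ : 0 ≤ γ) (hγα : 1 ≤ α - γ) (hCV : 0 ≤ CV) (hC : 0 ≤ C) {f : V → ℝ} {x : V}
    (hf₀ : ∀ z, 0 ≤ f z) (hf : ∀ z, f z ≤ C)
    (hdecay : ∀ z, 0 < dist x z → f z ≤ C * dist x z ^ (-γ)) {r : ℝ} (hr : 1 ≤ r) :
    ∑ z ∈ (hball x r).toFinset, f z * lam z ≤ C * CV * 2 ^ α * 2 ^ (α - γ) * r ^ (α - γ) := by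
  obtain ⟨k, hkr, hrk⟩ := exists_nat_pow_near hr one_lt_two
  calc ∑ z ∈ (hball x r).toFinset, f z * lam z
      ≤ ∑ z ∈ (hball x (2 ^ (k + 1))).toFinset, f z * lam z :=
        Finset.sum_le_sum_of_subset_of_nonneg
          (ball_toFinset_subset hball (by rw [dist_self, zero_add]; exact hrk.le))
          fun z _ _ => mul_nonneg (hf₀ z) (hlam z)
    _ ≤ C * CV * 2 ^ α * (2 ^ (k + 1)) ^ (α - γ) :=
        sum_dyadic_ball_mul_le hV hlam hα hγ hγα hCV hC hf hdecay (k + 1)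
    _ = C * CV * 2 ^ α * 2 ^ (α - γ) * (2 ^ k) ^ (α - γ) := by
        rw [pow_succ, Real.mul_rpow (by positivity) zero_le_two]; ring
    _ ≤ C * CV * 2 ^ α * 2 ^ (α - γ) * r ^ (α - γ) := by
        gcongr

end VolumeGrowth

section ExitBarrier

variable {V : Type*} [PseudoMetricSpace V] {p : V → V → ℝ} {lam : V → ℝ}
  {hball : ∀ (x : V) (r : ℝ), {y | dist x y ≤ r}.Finite}

/-- The expected total time that the walk spends in the ball `B(x₀, r)`, as a function of its
starting point. -/
noncomputable def ballPotential (hball : ∀ (x : V) (r : ℝ), {y | dist x y ≤ r}.Finite)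
    (p : V → V → ℝ) (lam : V → ℝ) (x₀ : V) (r : ℝ) : V → ℝ :=
  ∑ z ∈ (hball x₀ r).toFinset, lam z • (green p lam · z)

lemma ballPotential_apply (x₀ : V) (r : ℝ) (y : V) :
    ballPotential hball p lam x₀ r y =
      ∑ z ∈ (hball x₀ r).toFinset, green p lam y z * lam z := by
  simp [ballPotential, mul_comm]

lemma ballPotential_le_one_add_transitionOp (hfin : HasFiniteRange p)
    (htrans : ∀ x y, Summable fun n => nstep p n x y) (hlam : ∀ x, lam x ≠ 0) (x₀ : V) (r : ℝ)
    (y : V) :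
    ballPotential hball p lam x₀ r y ≤
      1 + transitionOp hfin (ballPotential hball p lam x₀ r) y := by
  classical
  have hpoisson : ballPotential hball p lam x₀ r =
      ∑ z ∈ (hball x₀ r).toFinset, Pi.single z 1 +
        transitionOp hfin (ballPotential hball p lam x₀ r) := by
    simp only [ballPotential, map_sum, map_smul, ← Finset.sum_add_distrib]
    refine Finset.sum_congr rfl fun z _ => ?_
    conv_lhs => rw [green_eq_single_add_transitionOp hfin htrans z, smul_add, ← Pi.single_smul,
      smul_eq_mul, mul_one_div_cancel (hlam z)]
  have hmass : (∑ z ∈ (hball x₀ r).toFinset, Pi.single z (1 : ℝ) : V → ℝ) y ≤ 1 := by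
    rw [Finset.sum_apply, Finset.sum_pi_single]
    split_ifs
    exacts [le_rfl, zero_le_one]
  exact (congrFun hpoisson y).trans_le (add_le_add_left hmass _)

variable {α γ cV CV cg Cg : ℝ}

lemma le_ballPotential_center (hV : HasVolumeGrowth hball lam α cV CV) (hlam : ∀ x, 0 ≤ lam x)
    (hg : HasGreenDecay (green p lam) γ cg Cg) (hγ : 0 < γ) (hcg : 0 ≤ cg)
    (hpos : ∀ x y, 0 < green p lam x y) (x₀ : V) {r : ℝ} (hr : 1 ≤ r) :
    cg * cV * r ^ (α - γ) ≤ ballPotential hball p lam x₀ r x₀ := by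
  have hr₀ : 0 < r := one_pos.trans_le hr
  calc cg * cV * r ^ (α - γ) = cg * r ^ (-γ) * (cV * r ^ α) := by
        rw [sub_eq_neg_add, Real.rpow_add hr₀]; ring
    _ ≤ cg * r ^ (-γ) * ∑ z ∈ (hball x₀ r).toFinset, lam z := by
        gcongr
        exact (hV x₀ r hr).1
    _ ≤ ballPotential hball p lam x₀ r x₀ := by
        rw [ballPotential_apply, Finset.mul_sum]
        gcongr with z hz
        · exact hlam z
        · exact hg.le_of_dist_le hγ hcg hpos hr (by simpa using hz)

lemma ballPotential_le_of_lt_dist (hV : HasVolumeGrowth hball lam α cV CV)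
    (hlam : ∀ x, 0 ≤ lam x) (hg : HasGreenDecay (green p lam) γ cg Cg) (hγ : 0 ≤ γ)
    (hCg : 0 ≤ Cg) {A r : ℝ} (hA : 0 < A) (hr : 1 ≤ r) {x₀ y : V}
    (hy : (A + 1) * r < dist x₀ y) :
    ballPotential hball p lam x₀ r y ≤ Cg * CV * A ^ (-γ) * r ^ (α - γ) := by
  have hr₀ : 0 < r := one_pos.trans_le hr
  rw [ballPotential_apply]
  refine (sum_ball_mul_le (B := Cg * (A * r) ^ (-γ)) hV hlam hr (by positivity) subset_rfl
    fun z hz => ?_).trans_eq ?_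
  · have hz : dist x₀ z ≤ r := by simpa using hz
    refine hg.le_of_le_dist hγ hCg (by positivity) ?_
    linarith [dist_triangle x₀ z y, dist_comm z y]
  · rw [Real.mul_rpow hA.le hr₀.le, sub_eq_neg_add, Real.rpow_add hr₀]
    ring

lemma exists_ballPotential_le (hV : HasVolumeGrowth hball lam α cV CV) (hlam : ∀ x, 0 ≤ lam x)
    (hg : HasGreenDecay (green p lam) γ cg Cg) (hg₀ : ∀ x y, 0 ≤ green p lam x y)
    (hg₁ : ∀ x y, green p lam x y ≤ Cg) (hγ : 0 ≤ γ) (hγα : 1 ≤ α - γ) (hCV : 0 < CV)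
    (hCg : 0 < Cg) :
    ∃ K : ℝ, 0 < K ∧ ∀ x₀ r, 1 ≤ r → ∀ y, ballPotential hball p lam x₀ r y ≤ K * r ^ (α - γ) := by
  set K := Cg * CV * 2 ^ α * 2 ^ (α - γ) * 3 ^ (α - γ)
  refine ⟨max (Cg * CV) K, lt_max_of_lt_left (by positivity), fun x₀ r hr y => ?_⟩
  have hr₀ : 0 < r := one_pos.trans_le hr
  rcases lt_or_ge ((1 + 1) * r) (dist x₀ y) with hfar | hnear
  · calc ballPotential hball p lam x₀ r y ≤ Cg * CV * 1 ^ (-γ) * r ^ (α - γ) :=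
          ballPotential_le_of_lt_dist hV hlam hg hγ hCg.le one_pos hr hfar
      _ ≤ max (Cg * CV) K * r ^ (α - γ) := by
          rw [Real.one_rpow, mul_one]
          gcongr
          exact le_max_left _ _
  · calc ballPotential hball p lam x₀ r y
        ≤ ∑ z ∈ (hball y (3 * r)).toFinset, green p lam y z * lam z := by
          rw [ballPotential_apply]
          refine Finset.sum_le_sum_of_subset_of_nonneg
            (ball_toFinset_subset hball ?_) fun z _ _ => mul_nonneg (hg₀ y z) (hlam z)
          rw [dist_comm]
          linarith
      _ ≤ Cg * CV * 2 ^ α * 2 ^ (α - γ) * (3 * r) ^ (α - γ) :=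
          sum_ball_mul_le_rpow hV hlam (by linarith) hγ hγα hCV.le hCg.le (hg₀ y) (hg₁ y)
            (fun z => hg.le_of_dist_pos) (by linarith)
      _ = K * r ^ (α - γ) := by rw [Real.mul_rpow zero_le_three hr₀.le]; ring
      _ ≤ max (Cg * CV) K * r ^ (α - γ) := by
          gcongr
          exact le_max_right _ _

lemma isExitBarrier_of_potential (hp : IsStochastic p) {hfin : HasFiniteRange p} {F : V → ℝ}
    {H h r : ℝ} {x₀ : V} (hH : 0 < H) (hh : 0 ≤ h) (hF : ∀ y, F y ≤ H)
    (hsuper : ∀ y, F y ≤ 1 + transitionOp hfin F y) (hout : ∀ y, r < dist x₀ y → F y ≤ h)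
    (hcenter : 2 * h ≤ F x₀) :
    IsExitBarrier hfin (Real.exp H⁻¹) r (1 - h / (2 * H)) x₀
      (1 + (2 * H)⁻¹ • (h • (1 : V → ℝ) - F)) := by
  set ψ : V → ℝ := 1 + (2 * H)⁻¹ • (h • (1 : V → ℝ) - F) with hψ
  have hψ_apply (y : V) : ψ y = 1 + (2 * H)⁻¹ * (h - F y) := by simp [hψ]
  have hψ_half (y : V) : 1 / 2 ≤ ψ y := by
    have hHF : -(1 / 2) = (2 * H)⁻¹ * -H := by field_simp
    have : (2 * H)⁻¹ * -H ≤ (2 * H)⁻¹ * (h - F y) := by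
      gcongr
      linarith [hF y]
    linarith [hψ_apply y]
  refine ⟨fun y => by linarith [hψ_half y], fun y hy => ?_, ?_, fun y => ?_⟩
  · rw [hψ_apply]
    exact le_add_of_nonneg_right (mul_nonneg (by positivity) (sub_nonneg.2 (hout y hy)))
  · calc ψ x₀ = 1 + (2 * H)⁻¹ * (h - F x₀) := hψ_apply x₀
      _ ≤ 1 + (2 * H)⁻¹ * -h := by gcongr; linarith
      _ = 1 - h / (2 * H) := by ring
  · calc transitionOp hfin ψ y = 1 + (2 * H)⁻¹ * (h - transitionOp hfin F y) := by
          simp [hψ, hp.transitionOp_one hfin]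
      _ ≤ 1 + (2 * H)⁻¹ * (h + 1 - F y) := by gcongr 1 + _ * ?_; linarith [hsuper y]
      _ = ψ y + H⁻¹ * (1 / 2) := by rw [hψ_apply, mul_inv]; ring
      _ ≤ ψ y + H⁻¹ * ψ y := by gcongr; exact hψ_half y
      _ = (H⁻¹ + 1) * ψ y := by ring
      _ ≤ Real.exp H⁻¹ * ψ y := by
          gcongr
          · linarith [hψ_half y]
          · exact Real.add_one_le_exp _

theorem exists_isExitBarrier (hp : IsStochastic p) (hfin : HasFiniteRange p)
    (htrans : ∀ x y, Summable fun n => nstep p n x y) (hlam : ∀ x, 0 < lam x)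
    (hV : HasVolumeGrowth hball lam α cV CV) (hg : HasGreenDecay (green p lam) γ cg Cg)
    (hpos : ∀ x y, 0 < green p lam x y) (hg₁ : ∀ x y, green p lam x y ≤ Cg) (hγ : 0 < γ)
    (hγα : 1 ≤ α - γ) (hcV : 0 < cV) (hCV : 0 < CV) (hcg : 0 < cg) (hCg : 0 < Cg) :
    ∃ L M ε : ℝ, 0 < L ∧ 0 < M ∧ 0 < ε ∧ ∀ ρ : ℝ, 1 ≤ ρ → ∀ x₀, ∃ ψ,
      IsExitBarrier hfin (Real.exp (M * ρ ^ (-(α - γ)))) (L * ρ) (1 - ε) x₀ ψ := by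
  have hlam₀ := fun x => (hlam x).le
  obtain ⟨K, hK, hFK⟩ := exists_ballPotential_le hV hlam₀ hg (fun x y => (hpos x y).le) hg₁
    hγ.le hγα hCV hCg
  set b := cg * cV / 2 with hb
  have hb₀ : 0 < b := by positivity
  obtain ⟨A, hAb, hA⟩ : ∃ A : ℝ, Cg * CV * A ^ (-γ) ≤ b ∧ 0 < A := by
    have hlim := (tendsto_rpow_neg_atTop hγ).const_mul (Cg * CV)
    rw [mul_zero] at hlim
    exact ((hlim.eventually_le_const hb₀).and (Filter.eventually_gt_atTop 0)).exists
  refine ⟨A + 1, K⁻¹, b / (2 * K), by positivity, by positivity, by positivity,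
    fun ρ hρ x₀ => ?_⟩
  have hρ₀ : 0 < ρ := one_pos.trans_le hρ
  have hbar := isExitBarrier_of_potential (r := (A + 1) * ρ) (h := b * ρ ^ (α - γ))
    (H := K * ρ ^ (α - γ)) hp (by positivity) (by positivity) (hFK x₀ ρ hρ)
    (ballPotential_le_one_add_transitionOp hfin htrans (fun x => (hlam x).ne') x₀ ρ)
    (fun y hy => (ballPotential_le_of_lt_dist hV hlam₀ hg hγ.le hCg.le hA hρ hy).trans
      (by gcongr))
    ((le_ballPotential_center hV hlam₀ hg hγ hcg.le hpos x₀ hρ).trans_eq' (by rw [hb]; ring))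
  have hθ : (K * ρ ^ (α - γ))⁻¹ = K⁻¹ * ρ ^ (-(α - γ)) := by
    rw [mul_inv, Real.rpow_neg hρ₀.le]
  have hq : b * ρ ^ (α - γ) / (2 * (K * ρ ^ (α - γ))) = b / (2 * K) := by
    field_simp
  rw [hθ, hq] at hbar
  exact ⟨_, hbar⟩

theorem exit_time_upper_tail_general [Nonempty V] (hp : IsStochastic p)
    (hirr : IsIrreducibleKernel p) (htrans : ∀ x y, Summable fun n => nstep p n x y) {c₀ : ℝ}
    (hc₀ : 0 < c₀) (hp₀ : ∀ x y, p x y ≠ 0 → c₀ ≤ p x y) (hlam : ∀ x, 0 < lam x) {β : ℝ}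
    (hβ : 1 < β) (hβα : β < α) (hcV : 0 < cV) (hV : HasVolumeGrowth hball lam α cV CV)
    (hcg : 0 < cg) (hg : HasGreenDecay (green p lam) (α - β) cg Cg) :
    ∃ C c : ℝ, 0 < C ∧ 0 < c ∧ ∀ (x : V) (R : ℝ) (n : ℕ), 0 < R → 0 < n →
      1 - ∑' y, nstep (killedKernel p {v | dist x v ≤ R}) n x y ≤
        C * Real.exp (-(c * R ^ β / n) ^ (1 / (β - 1))) := by
  have hfin := hp.hasFiniteRange hc₀ hp₀
  have hlam₀ := fun x => (hlam x).le
  have hγ : 0 < α - β := sub_pos.2 hβα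
  have hαγ : α - (α - β) = β := sub_sub_cancel α β
  have hCV := hV.pos hcV
  have hCg : 0 < Cg := hcg.trans_le (hg.diag (Classical.arbitrary V)).1 |>.trans_le
    (hg.diag (Classical.arbitrary V)).2
  obtain ⟨L, M, ε, hL, hM, hε, hbar⟩ := exists_isExitBarrier hp hfin htrans hlam hV hg
    (green_pos hp.nonneg hfin hirr htrans hlam)
    (green_le_of_hasGreenDecay hp hfin hirr htrans hball hg hγ.le hCg.le) hγ
    (by rw [hαγ]; exact hβ.le) hcV hCV hcg hCg
  rw [hαγ] at hbar
  obtain ⟨C, c, hC, hc, hexit⟩ := exists_exitProb_ball_le hp hfin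
    (fun x y => dist_le_of_hasGreenDecay_green hp.nonneg hfin htrans hlam₀ hc₀ hp₀ hg hγ hcg hCg)
    (by positivity) hL hM.le hε hβ hbar
  refine ⟨C, c, hC, hc, fun x R n hR hn => ?_⟩
  have hx : x ∈ {v | dist x v ≤ R} := (dist_self x).trans_le hR.le
  simpa only [exitProb, if_pos hx] using hexit x R n hR hn

end ExitBarrier

section WeightedGraph

variable {V : Type*} {G : SimpleGraph V} {w p : V → V → ℝ} {lam : V → ℝ}

lemma adj_of_transition_ne_zero (hw : ∀ x y, 0 ≤ w x y) (hw_adj : ∀ x y, 0 < w x y ↔ G.Adj x y)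
    (hp : ∀ x y, p x y = w x y / lam x) {x y : V} (hxy : p x y ≠ 0) : G.Adj x y := by
  rw [hp] at hxy
  exact (hw_adj x y).1 ((hw x y).lt_of_ne' (div_ne_zero_iff.1 hxy).1)

lemma isIrreducibleKernel_of_connected (hconn : G.Connected)
    (hp : ∀ x y, G.Adj x y → 0 < p x y) : IsIrreducibleKernel p := fun x y =>
  Relation.ReflTransGen.mono (fun a b hab => (hp a b hab).ne') x y
    (G.reachable_iff_reflTransGen x y |>.1 (hconn x y))

variable [∀ v, Fintype (G.neighborSet v)]

lemma vertexWeight_pos [Nontrivial V] (hconn : G.Connected)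
    (hw_adj : ∀ x y, 0 < w x y ↔ G.Adj x y) (hlam : ∀ x, lam x = ∑ y ∈ G.neighborFinset x, w x y)
    (x : V) : 0 < lam x := by
  obtain ⟨y, hxy⟩ := hconn.preconnected.exists_adj_of_nontrivial x
  rw [hlam]
  exact Finset.sum_pos (fun z hz => (hw_adj x z).2 (by simpa using hz)) ⟨y, by simpa using hxy⟩

lemma isStochastic_of_eq_div (hw : ∀ x y, 0 ≤ w x y) (hw_adj : ∀ x y, 0 < w x y ↔ G.Adj x y)
    (hlam : ∀ x, lam x = ∑ y ∈ G.neighborFinset x, w x y) (hlam_pos : ∀ x, 0 < lam x)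
    (hp : ∀ x y, p x y = w x y / lam x) : IsStochastic p where
  nonneg x y := by
    rw [hp]
    exact div_nonneg (hw x y) (hlam_pos x).le
  hasSum_one x := by
    have hsum : ∑ y ∈ G.neighborFinset x, p x y = 1 := by
      simp only [hp, ← Finset.sum_div, ← hlam]
      exact div_self (hlam_pos x).ne'
    rw [← hsum]
    refine hasSum_sum_of_ne_finset_zero fun y hy => ?_
    contrapose! hy
    simpa using adj_of_transition_ne_zero hw hw_adj hp hy

end WeightedGraph

/-- sub-Gaussian upper bound on the probability of exiting B(x,R) within n steps:
P_x(T_{B(x,R)} ≤ n) ≤ C exp(−(c R^β/n)^{1/(β−1)}). -/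
theorem exit_time_upper_tail
    {V : Type*} (G : SimpleGraph V) [∀ v : V, Fintype (G.neighborSet v)] [Infinite V]
    (hconn : G.Connected)
    (w : V → V → ℝ) (lam : V → ℝ) (p : V → V → ℝ) (d : V → V → ℝ)
    (hw_symm : ∀ x y, w x y = w y x)
    (hw_nonneg : ∀ x y, 0 ≤ w x y)
    (hw_adj : ∀ x y, 0 < w x y ↔ G.Adj x y)
    (hlam : ∀ x, lam x = ∑ y ∈ G.neighborFinset x, w x y)
    (hp : ∀ x y, p x y = w x y / lam x)
    (htrans : ∀ x y, Summable (fun n => nstep p n x y))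
    (c₀ : ℝ) (hc₀ : 0 < c₀) (hp₀ : ∀ x y, G.Adj x y → c₀ ≤ p x y)
    (hd_symm : ∀ x y, d x y = d y x)
    (hd_self : ∀ x, d x x = 0)
    (hd_nonneg : ∀ x y, 0 ≤ d x y)
    (hd_tri : ∀ x y z, d x z ≤ d x y + d y z)
    (hBfin : ∀ (x : V) (L : ℝ), {y | d x y ≤ L}.Finite)
    (α β : ℝ) (hα : 2 < α) (hβ₂ : 2 ≤ β) (hβα : β < α)
    (cV CV : ℝ) (hcV : 0 < cV)
    (hVol : ∀ (x : V) (L : ℝ), 1 ≤ L →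
      cV * L ^ α ≤ ∑ y ∈ (hBfin x L).toFinset, lam y ∧
        ∑ y ∈ (hBfin x L).toFinset, lam y ≤ CV * L ^ α)
    (cg Cg : ℝ) (hcg : 0 < cg)
    (hGdiag : ∀ x : V, cg ≤ green p lam x x ∧ green p lam x x ≤ Cg)
    (hGoff : ∀ x y : V, x ≠ y →
      cg * d x y ^ (-(α - β)) ≤ green p lam x y ∧
        green p lam x y ≤ Cg * d x y ^ (-(α - β))) :
    ∃ C c : ℝ, 0 < C ∧ 0 < c ∧ ∀ (x : V) (R : ℝ) (n : ℕ), 0 < R → 0 < n →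
      1 - ∑' y : V, nstep (killedKernel p {v | d x v ≤ R}) n x y ≤
        C * Real.exp (-(c * R ^ β / n) ^ ((1 : ℝ) / (β - 1))) := by
  let : PseudoMetricSpace V :=
    { dist := d, dist_self := hd_self, dist_comm := hd_symm, dist_triangle := hd_tri }
  have hlam_pos := vertexWeight_pos hconn hw_adj hlam
  have hadj (x y : V) (hxy : p x y ≠ 0) := adj_of_transition_ne_zero hw_nonneg hw_adj hp hxy
  exact exit_time_upper_tail_general (hball := hBfin)
    (isStochastic_of_eq_div hw_nonneg hw_adj hlam hlam_pos hp)
    (isIrreducibleKernel_of_connected hconn fun x y hxy => hc₀.trans_le (hp₀ x y hxy)) htrans hc₀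
    (fun x y hxy => hp₀ x y (hadj x y hxy)) hlam_pos (by linarith) hβα hcV hVol hcg ⟨hGdiag, hGoff⟩
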